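/- arXiv:1404.4852 — 3 statements merged into one kernel-verified Lean document; each statement's English description precedes it below -/
import Mathlib

section
/- Let r ≥ 1 and let d, v, q be natural numbers with d ≤ v ≤ r and d ≤ q ≤ r. Let a_x, b_x, c_x, a_y, b_y, c_y, l_x, l_y ∈ Z_{2^r}, and define P(x) = a_x x^2 + b_x x + c_x and Q(y, h) = a_y y^2 + b_y y + c_y + 2^{r-d} h. Then 2^{min(v,q)+d} divides the number of triples of natural numbers (j_x, j_y, j_h) with j_x < 2^v, j_y < 2^q, j_h < 2^d such that P(l_x + 2^{r-v} j_x) = Q(l_y + 2^{r-q} j_y, j_h) holds in Z_{2^r}. -/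
/-!
Each solution `(x, y)` of the congruence `P(x) ≡ Q(y, 0)` modulo `2^{r-d}` determines `h` uniquely,
and cutting the two progressions into progressions of a common step divides that step out of the
congruence. It remains to see that `f(x) + g(y) ≡ 0 [mod 2^n]`, with `f` and `g` quadratic, has a
number of solutions in `[0, 2^{n+d})²` divisible by `2^{n+2d}`; this is an induction on `n`, after
splitting `x` and `y` by parity.

* If `f` has an odd linear coefficient `A`, then `f'(x) = 2ax + A` is always odd, so every solution
  modulo `2` lifts in the same number of ways; the number of solutions modulo `2` is even because
  `f + g` is affine modulo `2`. The case of `g` is symmetric.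
* If both linear coefficients are even, then on each parity class `f + g` is `4` times a polynomial
  of the same shape plus a constant, so `n` drops by two. For `n = 1` the congruence depends only on
  the parities, and the count modulo `2` is again even.
-/

open Finset Function

theorem sum_range_mul_eq_sum_sum {α : Type*} [AddCommMonoid α] (s m : ℕ) (f : ℕ → α) :
    ∑ j ∈ range (s * m), f j = ∑ e ∈ range s, ∑ i ∈ range m, f (e + s * i) := by
  rw [sum_comm]
  induction m with
  | zero => simp
  | succ m ih =>
    rw [Nat.mul_succ, sum_range_add, ih, sum_range_succ]
    simp only [add_comm (s * m)]

theorem card_filter_range_mul_of_bijective {k : ℕ} [NeZero k] {φ : ZMod k → ZMod k}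
    (hφ : Bijective φ) (m : ℕ) (c : ZMod k) : #{x ∈ range (k * m) | φ (x : ℕ) = c} = m := by
  obtain ⟨z, rfl⟩ := hφ.surjective c
  have solution_iff (x : ℕ) : φ x = φ z ↔ x ≡ z.val [MOD k] := by
    rw [hφ.injective.eq_iff, ← ZMod.natCast_eq_natCast_iff, ZMod.natCast_zmod_val]
  have hk : 0 < k := NeZero.pos k
  simp only [solution_iff, ← Nat.count_eq_card_filter_range, Nat.count_modEq_card _ hk]
  simp [hk]

theorem card_filter_range_intCast_eq_mul {s k : ℕ} (hs : s ≠ 0) [NeZero k] (D : ℤ) :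
    #{h ∈ range k | (D : ZMod (s * k)) = s * (h : ℕ)} = if (s : ℤ) ∣ D then 1 else 0 := by
  have eq_iff (h : ℕ) :
      (D : ZMod (s * k)) = s * (h : ZMod (s * k)) ↔ (s * k : ℤ) ∣ D - s * h := by
    have := ZMod.intCast_zmod_eq_zero_iff_dvd (D - s * h) (s * k)
    push_cast at this
    rw [← this, sub_eq_zero]
  simp only [eq_iff]
  split_ifs with hD
  · obtain ⟨c, rfl⟩ := hD
    have eq_class_iff (h : ℕ) : (s * k : ℤ) ∣ s * c - s * h ↔ id (h : ZMod k) = c := by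
      rw [← mul_sub, mul_dvd_mul_iff_left (by exact_mod_cast hs),
        ← ZMod.intCast_eq_intCast_iff_dvd_sub, Int.cast_natCast, id]
    simp only [eq_class_iff]
    simpa using card_filter_range_mul_of_bijective bijective_id 1 (c : ZMod k)
  · rw [card_eq_zero, filter_eq_empty_iff]
    intro h _ hdvd
    exact hD <| (dvd_sub_left (dvd_mul_right _ _)).1 <| (dvd_mul_right _ _).trans hdvd

/-- The number of lattice points of the box `[0, M) × [0, N)` at which `F` vanishes modulo `k`.
`F` takes integer rather than residue arguments so that factors common to `F` and `k` can be
cancelled. -/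
def boxCount (M N : ℕ) (k : ℤ) (F : ℤ → ℤ → ℤ) : ℕ :=
  #{p ∈ range M ×ˢ range N | k ∣ F (p.1 : ℕ) (p.2 : ℕ)}

namespace boxCount

variable (M N : ℕ) (k : ℤ) (F : ℤ → ℤ → ℤ)

theorem eq_sum_card :
    boxCount M N k F = ∑ x ∈ range M, #{y ∈ range N | k ∣ F (x : ℕ) (y : ℕ)} := by
  simp only [boxCount, card_filter, sum_product]

theorem swap : boxCount M N k (fun x y ↦ F y x) = boxCount N M k F := by
  simp only [eq_sum_card, card_filter]
  exact sum_comm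

theorem modulus_one : boxCount M N 1 F = M * N := by
  simp [boxCount]

theorem mul_left_eq_sum (s : ℕ) :
    boxCount (s * M) N k F = ∑ e ∈ range s, boxCount M N k fun x y ↦ F (e + s * x) y := by
  simp only [eq_sum_card, sum_range_mul_eq_sum_sum]
  push_cast
  rfl

theorem mul_right_eq_sum (s : ℕ) :
    boxCount M (s * N) k F = ∑ f ∈ range s, boxCount M N k fun x y ↦ F x (f + s * y) := by
  rw [← swap, mul_left_eq_sum]
  exact sum_congr rfl fun f _ ↦ swap N M k fun x y ↦ F x (f + s * y)

variable {M N k F}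

theorem mul_add_const {s : ℤ} (hs : s ≠ 0) (c : ℤ) :
    boxCount M N (s * k) (fun x y ↦ s * F x y + c) =
      if s ∣ c then boxCount M N k (fun x y ↦ F x y + c / s) else 0 := by
  split_ifs with hc
  · obtain ⟨c, rfl⟩ := hc
    simp only [boxCount, ← mul_add, mul_dvd_mul_iff_left hs, Int.mul_ediv_cancel_left c hs]
  · rw [boxCount, card_eq_zero, filter_eq_empty_iff]
    intro p _ hdvd
    exact hc <| (dvd_add_right (dvd_mul_right _ _)).1 <| (dvd_mul_right _ _).trans hdvd

theorem dvd_mul_add_const {D : ℕ} {s : ℤ} (hs : s ≠ 0)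
    (hD : ∀ c, D ∣ boxCount M N k fun x y ↦ F x y + c) (c : ℤ) :
    D ∣ boxCount M N (s * k) fun x y ↦ s * F x y + c := by
  rw [mul_add_const hs]
  split_ifs
  exacts [hD _, dvd_zero D]

-- `K` counts the lifts modulo `s * k` of a single zero `(e, f)` of `F` modulo `s`.
theorem eq_mul_of_lifts {s K : ℕ} (hs : s ≠ 0) {G : ℤ → ℤ → ℤ → ℤ → ℤ}
    (hFG : ∀ e f x y, F (e + s * x) (f + s * y) = s * G e f x y + F e f)
    (hK : ∀ e f c, boxCount M N k (fun x y ↦ G e f x y + c) = K) :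
    boxCount (s * M) (s * N) (s * k) F = K * boxCount s s s F := by
  rw [mul_left_eq_sum]
  simp only [mul_right_eq_sum, hFG, mul_add_const (Nat.cast_ne_zero.2 hs), hK]
  simp only [eq_sum_card, card_filter, mul_sum, mul_ite, mul_one, mul_zero]

end boxCount

theorem card_subtype_fin_triple_eq_boxCount {n s k : ℕ} (hn : s * k = n) (hs : s ≠ 0) (hk : k ≠ 0)
    (M N : ℕ) (F : ℤ → ℤ → ℤ) :
    Nat.card {t : Fin M × Fin N × Fin k //
      (F (t.1 : ℕ) (t.2.1 : ℕ) : ZMod n) = (s : ZMod n) * ((t.2.2 : ℕ) : ZMod n)} =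
    boxCount M N s F := by
  subst hn
  have : NeZero k := ⟨hk⟩
  have unique_third (x : Fin M) (y : Fin N) :
      ∑ h : Fin k, (if (F x y : ZMod (s * k)) = s * (h : ℕ) then 1 else 0) =
        if (s : ℤ) ∣ F x y then 1 else 0 := by
    rw [Fin.sum_univ_eq_sum_range fun h ↦ if (F x y : ZMod (s * k)) = s * (h : ℕ) then 1 else 0,
      ← card_filter, card_filter_range_intCast_eq_mul hs]
  simp only [Nat.card_eq_fintype_card, Fintype.card_subtype, card_filter, Fintype.sum_prod_type,
    unique_third, boxCount.eq_sum_card, ← Fin.sum_univ_eq_sum_range]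

theorem injective_quadratic_of_isNilpotent_of_isUnit {R : Type*} [CommRing R] {a A : R}
    (ha : IsNilpotent a) (hA : IsUnit A) : Injective fun x ↦ a * x ^ 2 + A * x := by
  intro x y hxy
  have hunit : IsUnit (a * (x + y) + A) :=
    ((Commute.all _ _).isNilpotent_mul_right ha).isUnit_add_right_of_commute hA (Commute.all _ _)
  refine sub_eq_zero.1 (hunit.mul_right_eq_zero.1 ?_)
  linear_combination hxy

/-- The quadratic polynomial `a x² + A x + b y² + B y` without mixed term, whose zeros modulo powers
of `2` are counted. The constant term is kept apart because it absorbs the value at the base point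
of each progression to which the variables are restricted. -/
def separableQuadratic (a A b B x y : ℤ) : ℤ :=
  (a * x ^ 2 + A * x) + (b * y ^ 2 + B * y)

namespace separableQuadratic

variable (a A b B c : ℤ)

theorem swap (x y : ℤ) : separableQuadratic a A b B x y = separableQuadratic b B a A y x :=
  add_comm _ _

theorem apply_add_mul (s e f x y : ℤ) :
    separableQuadratic a A b B (e + s * x) (f + s * y) =
      s * separableQuadratic (s * a) (2 * a * e + A) (s * b) (2 * b * f + B) x y +
        separableQuadratic a A b B e f := by
  simp only [separableQuadratic]
  ring

theorem two_dvd_boxCount_two :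
    2 ∣ boxCount 2 2 2 fun x y ↦ separableQuadratic a A b B x y + c := by
  have affine_count : boxCount 2 2 2 (fun x y ↦ separableQuadratic a A b B x y + c) =
      ((if 2 ∣ c then 1 else 0) + if 2 ∣ (b + B) + c then 1 else 0) +
        ((if 2 ∣ (a + A) + c then 1 else 0) + if 2 ∣ (a + A) + (b + B) + c then 1 else 0) := by
    simp only [boxCount.eq_sum_card, card_filter, sum_range_succ, sum_range_zero]
    simp [separableQuadratic]
  rw [affine_count]
  split_ifs <;> omega

variable {a A b B}

theorem two_mul_dvd_boxCount {M K : ℕ} {k : ℤ}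
    (hK : ∀ e f c, boxCount M M k
      (fun x y ↦ separableQuadratic (2 * a) (2 * a * e + A) (2 * b) (2 * b * f + B) x y + c) = K) :
    2 * K ∣ boxCount (2 * M) (2 * M) (2 * k) fun x y ↦ separableQuadratic a A b B x y + c := by
  have lifts := boxCount.eq_mul_of_lifts (F := fun x y ↦ separableQuadratic a A b B x y + c)
    two_ne_zero (fun e f x y ↦ by rw [apply_add_mul, Nat.cast_two, add_assoc]) hK
  rw [Nat.cast_two] at lifts
  rw [lifts, mul_comm 2 K]
  exact mul_dvd_mul_left K (two_dvd_boxCount_two a A b B c)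

theorem boxCount_of_odd (hA : Odd A) (n M N : ℕ) :
    boxCount (2 ^ n * M) N (2 ^ n) (fun x y ↦ separableQuadratic (2 * a) A b B x y + c) =
      M * N := by
  have nilpotent_two : IsNilpotent (2 : ZMod (2 ^ n)) :=
    ⟨n, by exact_mod_cast ZMod.natCast_self (2 ^ n)⟩
  have unit_A : IsUnit (A : ZMod (2 ^ n)) := by
    obtain ⟨j, rfl⟩ := hA
    push_cast
    exact ((Commute.all _ _).isNilpotent_mul_right nilpotent_two).isUnit_add_one
  have bijective_x := Finite.injective_iff_bijective.1 <|
    injective_quadratic_of_isNilpotent_of_isUnit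
      ((Commute.all 2 (a : ZMod (2 ^ n))).isNilpotent_mul_right nilpotent_two) unit_A
  have dvd_iff (x y : ℕ) : (2 : ℤ) ^ n ∣ separableQuadratic (2 * a) A b B x y + c ↔
      2 * (a : ZMod (2 ^ n)) * x ^ 2 + A * x = -(b * y ^ 2 + B * y + c : ℤ) := by
    have := ZMod.intCast_zmod_eq_zero_iff_dvd (separableQuadratic (2 * a) A b B x y + c) (2 ^ n)
    push_cast [separableQuadratic] at this ⊢
    rw [← this, eq_neg_iff_add_eq_zero]
    ring_nf
  rw [← boxCount.swap, boxCount.eq_sum_card]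
  have card_x (y : ℕ) :=
    card_filter_range_mul_of_bijective bijective_x M (-(b * y ^ 2 + B * y + c : ℤ))
  simp only [dvd_iff, card_x, sum_const, card_range, smul_eq_mul, mul_comm N]

theorem two_pow_dvd_boxCount_of_odd (hA : Odd A) (n d : ℕ) :
    2 ^ (n + 1 + 2 * d) ∣ boxCount (2 ^ (n + 1 + d)) (2 ^ (n + 1 + d)) (2 ^ (n + 1))
      fun x y ↦ separableQuadratic a A b B x y + c := by
  have lifts (e f c : ℤ) : boxCount (2 ^ (n + d)) (2 ^ (n + d)) (2 ^ n)
      (fun x y ↦ separableQuadratic (2 * a) (2 * a * e + A) (2 * b) (2 * b * f + B) x y + c) =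
        2 ^ d * 2 ^ (n + d) := by
    have odd_derivative : Odd (2 * a * e + A) := by
      rw [mul_assoc]
      exact (even_two_mul _).add_odd hA
    rw [← boxCount_of_odd c odd_derivative n, ← pow_add]
  convert two_mul_dvd_boxCount c lifts using 1 <;> ring_nf

theorem dvd_boxCount_of_even_even (hA : Even A) (hB : Even B) {D M : ℕ} {k : ℤ}
    (hD : ∀ A' B' c', D ∣ boxCount M M k fun x y ↦ separableQuadratic a A' b B' x y + c') :
    D ∣ boxCount (2 * M) (2 * M) (4 * k) fun x y ↦ separableQuadratic a A b B x y + c := by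
  obtain ⟨A, rfl⟩ := hA
  obtain ⟨B, rfl⟩ := hB
  rw [boxCount.mul_left_eq_sum]
  simp only [boxCount.mul_right_eq_sum]
  refine dvd_sum fun e _ ↦ dvd_sum fun f _ ↦ ?_
  have four_mul (x y : ℤ) :
      separableQuadratic a (A + A) b (B + B) (e + (2 : ℕ) * x) (f + (2 : ℕ) * y) + c =
        4 * separableQuadratic a (a * e + A) b (b * f + B) x y +
          (separableQuadratic a (A + A) b (B + B) e f + c) := by
    simp only [separableQuadratic]
    push_cast
    ring
  rw [funext₂ four_mul]
  exact boxCount.dvd_mul_add_const four_ne_zero (hD _ _) _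

theorem two_pow_dvd_boxCount_modulus_two (d : ℕ) :
    2 ^ (1 + 2 * d) ∣ boxCount (2 ^ (1 + d)) (2 ^ (1 + d)) 2
      fun x y ↦ separableQuadratic a A b B x y + c := by
  have := two_mul_dvd_boxCount (a := a) (A := A) (b := b) (B := B) c
    fun e f c ↦ boxCount.modulus_one (2 ^ d) (2 ^ d) _
  convert this using 1 <;> ring_nf

variable (a A b B) in
theorem two_pow_dvd_boxCount (n d : ℕ) :
    2 ^ (n + 2 * d) ∣ boxCount (2 ^ (n + d)) (2 ^ (n + d)) (2 ^ n)
      fun x y ↦ separableQuadratic a A b B x y + c := by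
  induction n using Nat.twoStepInduction generalizing d A B c with
  | zero => simp [boxCount.modulus_one, two_mul, pow_add]
  | one => simpa using two_pow_dvd_boxCount_modulus_two c d
  | more n ih _ =>
    by_cases hA : Odd A
    · exact two_pow_dvd_boxCount_of_odd c hA (n + 1) d
    by_cases hB : Odd B
    · rw [← boxCount.swap]
      simp only [swap a A]
      exact two_pow_dvd_boxCount_of_odd c hB (n + 1) d
    rw [Int.not_odd_iff_even] at hA hB
    convert dvd_boxCount_of_even_even c hA hB fun A' B' c' ↦ ih A' B' c' (d + 1)
      using 1 <;> ring_nf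

theorem two_pow_dvd_boxCount_progressions {r d v q : ℕ} (hdv : d ≤ v) (hvq : v ≤ q) (hqr : q ≤ r)
    (l m : ℤ) :
    2 ^ (v + d) ∣ boxCount (2 ^ v) (2 ^ q) (2 ^ (r - d)) fun x y ↦
      separableQuadratic a A b B (l + 2 ^ (r - v) * x) (m + 2 ^ (r - q) * y) + c := by
  obtain ⟨n, rfl⟩ := Nat.exists_eq_add_of_le' hdv
  obtain ⟨p, rfl⟩ := Nat.exists_eq_add_of_le' hvq
  obtain ⟨t, rfl⟩ := Nat.exists_eq_add_of_le' hqr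
  rw [pow_add 2 p, boxCount.mul_right_eq_sum]
  refine dvd_sum fun f _ ↦ ?_
  have common_step (x y : ℤ) :
      separableQuadratic a A b B (l + 2 ^ (t + p) * x) (m + 2 ^ t * (f + (2 ^ p : ℕ) * y)) + c =
        2 ^ (t + p) * separableQuadratic (2 ^ (t + p) * a) (2 * a * l + A) (2 ^ (t + p) * b)
          (2 * b * (m + 2 ^ t * f) + B) x y +
        (separableQuadratic a A b B l (m + 2 ^ t * f) + c) := by
    rw [← add_assoc, ← apply_add_mul]
    push_cast
    ring_nf
  rw [show t + (p + (n + d)) - (n + d) = t + p by omega,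
    show t + (p + (n + d)) - (p + (n + d)) = t by omega,
    show t + (p + (n + d)) - d = t + p + n by omega, pow_add _ (t + p) n,
    show n + d + d = n + 2 * d by ring]
  rw [funext₂ common_step]
  exact boxCount.dvd_mul_add_const (by positivity)
    (fun c ↦ two_pow_dvd_boxCount _ _ _ _ c n d) _

theorem two_pow_min_dvd_boxCount_progressions {r d v q : ℕ} (hdv : d ≤ v) (hvr : v ≤ r)
    (hdq : d ≤ q) (hqr : q ≤ r) (l m : ℤ) :
    2 ^ (min v q + d) ∣ boxCount (2 ^ v) (2 ^ q) (2 ^ (r - d)) fun x y ↦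
      separableQuadratic a A b B (l + 2 ^ (r - v) * x) (m + 2 ^ (r - q) * y) + c := by
  rcases le_total v q with hvq | hqv
  · rw [min_eq_left hvq]
    exact two_pow_dvd_boxCount_progressions c hdv hvq hqr l m
  · rw [min_eq_right hqv, ← boxCount.swap]
    simp only [swap a A]
    exact two_pow_dvd_boxCount_progressions c hdq hqv hvr m l

end separableQuadratic

/-- For `P(x) = aₓx² + bₓx + cₓ` and `Q(y,h) = a_y y² + b_y y + c_y + 2^{r-d} h` over
`ℤ/2^r` with `d ≤ v ≤ r` and `d ≤ q ≤ r`, the number of triples `(jₓ, j_y, j_h)` with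
`jₓ < 2^v`, `j_y < 2^q`, `j_h < 2^d` and `P(lₓ + 2^{r-v} jₓ) = Q(l_y + 2^{r-q} j_y, j_h)`
is divisible by `2^{min(v,q)+d}`. -/
theorem stmt_17 (r d v q : ℕ) (hr : 1 ≤ r) (hdv : d ≤ v) (hv : v ≤ r)
    (hdq : d ≤ q) (hq : q ≤ r)
    (aX bX cX aY bY cY lX lY : ZMod (2 ^ r)) :
    (2 ^ (min v q + d) : ℕ) ∣
    Nat.card {t : Fin (2 ^ v) × Fin (2 ^ q) × Fin (2 ^ d) //
      aX * (lX + (2 : ZMod (2 ^ r)) ^ (r - v) * ((t.1 : ℕ) : ZMod (2 ^ r))) ^ 2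
        + bX * (lX + (2 : ZMod (2 ^ r)) ^ (r - v) * ((t.1 : ℕ) : ZMod (2 ^ r))) + cX
      = aY * (lY + (2 : ZMod (2 ^ r)) ^ (r - q) * ((t.2.1 : ℕ) : ZMod (2 ^ r))) ^ 2
        + bY * (lY + (2 : ZMod (2 ^ r)) ^ (r - q) * ((t.2.1 : ℕ) : ZMod (2 ^ r))) + cY
        + (2 : ZMod (2 ^ r)) ^ (r - d) * ((t.2.2 : ℕ) : ZMod (2 ^ r))} := by
  obtain ⟨aX, rfl⟩ := ZMod.intCast_surjective aX
  obtain ⟨bX, rfl⟩ := ZMod.intCast_surjective bX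
  obtain ⟨cX, rfl⟩ := ZMod.intCast_surjective cX
  obtain ⟨aY, rfl⟩ := ZMod.intCast_surjective aY
  obtain ⟨bY, rfl⟩ := ZMod.intCast_surjective bY
  obtain ⟨cY, rfl⟩ := ZMod.intCast_surjective cY
  obtain ⟨lX, rfl⟩ := ZMod.intCast_surjective lX
  obtain ⟨lY, rfl⟩ := ZMod.intCast_surjective lY
  have hr_split : 2 ^ (r - d) * 2 ^ d = 2 ^ r := by
    rw [← pow_add, Nat.sub_add_cancel (hdv.trans hv)]
  have hdvd := separableQuadratic.two_pow_min_dvd_boxCount_progressions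
    (a := aX) (A := bX) (b := -aY) (B := -bY) (cX - cY) hdv hv hdq hq lX lY
  have hcard := card_subtype_fin_triple_eq_boxCount hr_split (by positivity) (by positivity)
    (2 ^ v) (2 ^ q) fun x y ↦ separableQuadratic aX bX (-aY) (-bY)
      (lX + 2 ^ (r - v) * x) (lY + 2 ^ (r - q) * y) + (cX - cY)
  push_cast at hcard
  rw [← hcard] at hdvd
  convert hdvd using 4 with t
  push_cast [separableQuadratic]
  rw [← sub_eq_zero, ← sub_eq_zero (b := 2 ^ (r - d) * _)]
  ring_nf
end

section
/- Let r ≥ 1 and let q, v, e be natural numbers with q ≤ r, v ≤ r, and e ≤ min(q, v). Let a_x, b_x, c, l_x ∈ Z_{2^r} and define P(x) = a_x x^2 + b_x x + c. For y ∈ Z_{2^r}, define the multiplicity c_S(y) = Σ_{i=0}^{2^e - 1} ( Σ_{f=0}^{v-1} f · #{ s ∈ ℕ : s < 2^{v-f-1} and y = 2^{r-e} i + 2^{r-v+f}(2s+1) } + (v+1) · [y = 2^{r-e} i] ), where [·] is 1 if the condition holds and 0 otherwise. Then 2^{e + min(q, v, ⌈r/2⌉)} divides Σ_{j=0}^{2^q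 - 1} c_S(P(l_x + 2^{r-q} j)). -/
/-!
For an integer `y`, let `w(y)` be the number of `m` in `(r - v, r - e]` with `2 ^ m ∣ y`, with
`m = r - e` counted twice. Then `c_S(y) = 2 ^ e * w(y)`, so the sum of `w` over the values of `P`
has to be divisible by `2 ^ min(q, v, ⌈r / 2⌉)`. Such a weight vanishes at odd numbers (once the
interval has a positive right end), and its value at `2 * y` is that at `y` of the weight with the
interval moved down by one, plus one if `0` was the left end; thus a common power of two in the
values can be divided out. Substituting `x = l + 2 ^ (r - q) * j` in `P`, the factor `2 ^ (r - q)`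
comes out of the nonconstant part and leaves a quadratic in `j` with leading coefficient divisible
by `2 ^ (r - q)`. For that quadratic, splitting `j` by parity trades one binary digit of `j` for one
more factor of two in the leading coefficient, until `A * j ^ 2 ≡ A * j` and the quadratic becomes
linear. For a linear function with odd slope, the number of `j < 2 ^ q` at which its value is
divisible by `2 ^ m` is exactly `2 ^ (q - m)`, and the repeated last term makes these counts
telescope.
-/

open Finset

lemma two_pow_succ_dvd_two_mul {n : ℕ} {y : ℤ} : (2 : ℤ) ^ (n + 1) ∣ 2 * y ↔ (2 : ℤ) ^ n ∣ y := by
  rw [pow_succ']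
  exact mul_dvd_mul_iff_left two_ne_zero

lemma not_two_pow_dvd_of_odd {n : ℕ} (hn : n ≠ 0) {y : ℤ} (hy : Odd y) : ¬ (2 : ℤ) ^ n ∣ y :=
  fun h ↦ Int.not_even_iff_odd.2 hy (even_iff_two_dvd.2 ((dvd_pow_self 2 hn).trans h))

lemma sum_range_two_mul {M : Type*} [AddCommMonoid M] (n : ℕ) (f : ℕ → M) :
    ∑ j ∈ range (2 * n), f j = ∑ i ∈ range n, f (2 * i) + ∑ i ∈ range n, f (2 * i + 1) := by
  induction n with
  | zero => simp
  | succ n ih =>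
    rw [mul_add_one, sum_range_succ, sum_range_succ, ih, sum_range_succ, sum_range_succ, add_assoc,
      add_add_add_comm]

lemma card_filter_range_dvd_mul_add {n : ℕ} (hn : 0 < n) (k : ℕ) {b : ℤ} (hb : IsCoprime b n)
    (c : ℤ) : #{j ∈ range (n * k) | (n : ℤ) ∣ b * (j : ℕ) + c} = k := by
  obtain ⟨x, y, hxy⟩ := id hb
  obtain ⟨root, -, hroot⟩ := Int.existsUnique_equiv_nat (-(x * c)) (Int.natCast_pos.2 hn)
  have dvd_iff_modEq (j : ℕ) : (n : ℤ) ∣ b * j + c ↔ j ≡ root [MOD n] := by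
    have root_dvd : (n : ℤ) ∣ b * root + c := by
      have : b * root + c = -b * (-(x * c) - root) + n * (y * c) := by
        linear_combination -c * hxy
      exact this ▸ (hroot.dvd.mul_left _).add (dvd_mul_right _ _)
    have : b * j + c = b * root + c - b * (root - j) := by ring
    rw [Nat.modEq_iff_dvd, this, dvd_sub_right root_dvd]
    exact ⟨hb.symm.dvd_of_dvd_mul_left, fun h ↦ h.mul_left b⟩
  simp_rw [dvd_iff_modEq]
  rw [← Nat.count_eq_card_filter_range, Nat.count_modEq_card _ hn]
  simp [hn.ne']

lemma card_filter_range_two_pow_dvd {q m : ℕ} (hm : m ≤ q) {b : ℤ} (hb : Odd b) (c : ℤ) :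
    #{j ∈ range (2 ^ q) | (2 : ℤ) ^ m ∣ b * (j : ℕ) + c} = 2 ^ (q - m) := by
  have hcop : IsCoprime b ((2 ^ m : ℕ) : ℤ) := by
    push_cast
    exact (Int.isCoprime_two_right.2 hb).pow_right
  simpa [← pow_add, Nat.add_sub_cancel' hm] using
    card_filter_range_dvd_mul_add (Nat.two_pow_pos m) (2 ^ (q - m)) hcop c

lemma sum_Ioc_two_pow_sub_add {q t : ℕ} (ht : t ≤ q) (u : ℕ) :
    ∑ m ∈ Ioc u t, 2 ^ (q - m) + 2 ^ (q - t) = 2 ^ (q - min u t) := by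
  induction t with
  | zero => simp
  | succ t ih =>
    obtain hut | hut := le_or_gt u t
    · have hdouble : 2 ^ (q - t) = 2 ^ (q - (t + 1)) + 2 ^ (q - (t + 1)) := by
        rw [← two_mul, ← pow_succ', Nat.sub_add_eq, Nat.sub_add_cancel (by omega)]
      rw [sum_Ioc_succ_top hut, add_assoc, ← hdouble, ih (by omega), min_eq_left hut,
        min_eq_left (by omega)]
    · rw [Ioc_eq_empty (by omega), sum_empty, zero_add, min_eq_right hut]

/-- The number of `m ∈ (u, t]` with `2 ^ m ∣ y`, where `m = t` is counted once more. For `u ≤ t`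
this is `t - u + 1` at the multiples of `2 ^ t`; at other `y` of `2`-adic valuation `w` it is the
truncated difference `w - u`. -/
def dyadicWeight (u t : ℕ) (y : ℤ) : ℕ :=
  #{m ∈ Ioc u t | (2 : ℤ) ^ m ∣ y} + if (2 : ℤ) ^ t ∣ y then 1 else 0

namespace dyadicWeight

lemma zero_right (u : ℕ) (y : ℤ) : dyadicWeight u 0 y = 1 := by
  simp [dyadicWeight]

lemma of_odd (u : ℕ) {t : ℕ} (ht : t ≠ 0) {y : ℤ} (hy : Odd y) : dyadicWeight u t y = 0 := by
  rw [dyadicWeight, if_neg (not_two_pow_dvd_of_odd ht hy), add_zero, card_eq_zero,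
    filter_eq_empty_iff]
  exact fun m hm ↦ not_two_pow_dvd_of_odd (by grind) hy

lemma succ_two_mul (u t : ℕ) (y : ℤ) :
    dyadicWeight u (t + 1) (2 * y) = (if u = 0 then 1 else 0) + dyadicWeight (u - 1) t y := by
  have shift (u : ℕ) :
      #{m ∈ Ioc (u + 1) (t + 1) | (2 : ℤ) ^ m ∣ 2 * y} = #{m ∈ Ioc u t | (2 : ℤ) ^ m ∣ y} := by
    rw [← map_add_right_Ioc, filter_map, card_map]
    simp only [Function.comp_def, addRightEmbedding_apply, two_pow_succ_dvd_two_mul]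
  simp only [dyadicWeight, two_pow_succ_dvd_two_mul]
  cases u with
  | zero =>
    rw [← insert_Ioc_add_one_left_eq_Ioc t.succ_pos, filter_insert, if_pos (by simp),
      card_insert_of_notMem (by simp), shift]
    simp [add_comm, add_left_comm]
  | succ u => simp [shift]

lemma congr {u t : ℕ} {y z : ℤ} (h : (2 : ℤ) ^ t ∣ y - z) :
    dyadicWeight u t y = dyadicWeight u t z := by
  have dvd_iff {m : ℕ} (hm : m ≤ t) : (2 : ℤ) ^ m ∣ y ↔ (2 : ℤ) ^ m ∣ z :=
    dvd_iff_dvd_of_dvd_sub ((pow_dvd_pow 2 hm).trans h)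
  rw [dyadicWeight, dyadicWeight, filter_congr fun m hm ↦ dvd_iff (mem_Ioc.1 hm).2]
  simp only [dvd_iff le_rfl]

lemma sum_odd_mul_add {q t : ℕ} (ht : t ≤ q) (u : ℕ) {b : ℤ} (hb : Odd b) (c : ℤ) :
    ∑ j ∈ range (2 ^ q), dyadicWeight u t (b * j + c) = 2 ^ (q - min u t) := by
  simp_rw [dyadicWeight, sum_add_distrib, card_filter]
  rw [sum_comm, ← sum_Ioc_two_pow_sub_add ht u]
  simp_rw [← card_filter]
  rw [card_filter_range_two_pow_dvd ht hb]
  congr 1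
  exact sum_congr rfl fun m hm ↦
    card_filter_range_two_pow_dvd ((mem_Ioc.1 hm).2.trans ht) hb c

lemma sum_sub_two_pow_mul {u t : ℕ} (hut : u ≤ t) (e : ℕ) (y : ℤ) :
    ∑ i ∈ range (2 ^ e), dyadicWeight u (t + e) (y - 2 ^ t * i) = 2 ^ e * dyadicWeight u t y := by
  induction t generalizing u y with
  | zero =>
    obtain rfl : u = 0 := by omega
    simpa [zero_right, neg_add_eq_sub] using sum_odd_mul_add le_rfl 0 (odd_neg.2 odd_one) y
  | succ t ih =>
    obtain ⟨z, rfl | rfl⟩ := Int.even_or_odd' y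
    · have (i : ℕ) : 2 * z - 2 ^ (t + 1) * (i : ℤ) = 2 * (z - 2 ^ t * i) := by ring
      simp_rw [this, add_right_comm t 1 e, succ_two_mul, sum_add_distrib,
        ih (u := u - 1) (by omega), mul_add]
      simp
    · rw [of_odd u t.succ_ne_zero (odd_two_mul_add_one z), mul_zero]
      refine sum_eq_zero fun i _ ↦ of_odd u (by omega) ?_
      exact (odd_two_mul_add_one z).sub_even ⟨2 ^ t * i, by ring⟩

section Sums

variable {ι : Type*} {s : Finset ι} {f : ι → ℤ} {d : ℕ}

lemma dvd_sum_two_mul_add {u t : ℕ} (hs : d ∣ #s)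
    (hf : ∀ c, d ∣ ∑ i ∈ s, dyadicWeight (u - 1) (t - 1) (f i + c)) (c : ℤ) :
    d ∣ ∑ i ∈ s, dyadicWeight u t (2 * f i + c) := by
  cases t with
  | zero => simpa [zero_right] using hs
  | succ t =>
    obtain ⟨c, rfl | rfl⟩ := Int.even_or_odd' c
    · simp_rw [← mul_add, succ_two_mul, sum_add_distrib, sum_const, smul_eq_mul]
      exact (hs.mul_right _).add (hf c)
    · rw [sum_eq_zero fun i _ ↦ of_odd u t.succ_ne_zero ⟨f i + c, by ring⟩]
      exact dvd_zero d

lemma dvd_sum_two_pow_mul_add {u t : ℕ} (h : ℕ) (hs : d ∣ #s)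
    (hf : ∀ c, d ∣ ∑ i ∈ s, dyadicWeight (u - h) (t - h) (f i + c)) (c : ℤ) :
    d ∣ ∑ i ∈ s, dyadicWeight u t (2 ^ h * f i + c) := by
  induction h generalizing u t c with
  | zero => simpa using hf c
  | succ h ih =>
    simp_rw [pow_succ', mul_assoc]
    refine dvd_sum_two_mul_add hs (ih fun c ↦ ?_) c
    simpa only [Nat.sub_sub, Nat.add_comm 1 h] using hf c

end Sums

lemma two_pow_dvd_sum_mul_add {q t : ℕ} (ht : t ≤ q) (u : ℕ) (b c : ℤ) :
    2 ^ (q - u) ∣ ∑ j ∈ range (2 ^ q), dyadicWeight u t (b * j + c) := by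
  induction t generalizing u b c with
  | zero => simpa [zero_right] using pow_dvd_pow 2 (Nat.sub_le q u)
  | succ t ih =>
    obtain ⟨b, rfl | rfl⟩ := Int.even_or_odd' b
    · simp_rw [mul_assoc]
      refine dvd_sum_two_mul_add ?_ (fun c ↦ ?_) c
      · simpa using pow_dvd_pow 2 (Nat.sub_le q u)
      · exact (pow_dvd_pow 2 (by omega)).trans (ih (by omega) (u - 1) b c)
    · rw [sum_odd_mul_add ht u (odd_two_mul_add_one b)]
      exact pow_dvd_pow 2 (by omega)

lemma quadratic_eq_linear {h t : ℕ} (ht : t ≤ h + 1) {a : ℤ} (ha : (2 : ℤ) ^ h ∣ a) (u : ℕ)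
    (b c x : ℤ) :
    dyadicWeight u t (a * x ^ 2 + b * x + c) = dyadicWeight u t ((a + b) * x + c) := by
  apply congr
  have hdiff : a * x ^ 2 + b * x + c - ((a + b) * x + c) = a * (x * (x - 1)) := by ring
  rw [hdiff]
  exact (pow_dvd_pow 2 ht).trans (mul_dvd_mul ha (Int.even_mul_pred_self x).two_dvd)

lemma two_pow_dvd_sum_quadratic {q t : ℕ} (ht : t ≤ q) (u : ℕ) {h : ℕ} {a : ℤ}
    (ha : (2 : ℤ) ^ h ∣ a) (b c : ℤ) :
    2 ^ min (q - u) ((q + h + 1) / 2) ∣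
      ∑ j ∈ range (2 ^ q), dyadicWeight u t (a * j ^ 2 + b * j + c) := by
  induction q generalizing h u t a b c with
  | zero => simp
  | succ q ih =>
    obtain hqh | hqh := le_or_gt q h
    · simp_rw [quadratic_eq_linear (ht.trans (by omega)) ha]
      exact (pow_dvd_pow 2 (min_le_left _ _)).trans (two_pow_dvd_sum_mul_add ht u _ c)
    have halved (b c : ℤ) : 2 ^ min (q + 1 - u) ((q + 1 + h + 1) / 2) ∣
        ∑ i ∈ range (2 ^ q), dyadicWeight u t (2 * (2 * a * i ^ 2 + b * i) + c) := by
      refine dvd_sum_two_mul_add ?_ (fun c ↦ ?_) c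
      · simpa using pow_dvd_pow 2 (by omega)
      · have ha' : (2 : ℤ) ^ (h + 1) ∣ 2 * a := two_pow_succ_dvd_two_mul.2 ha
        exact (pow_dvd_pow 2 (by omega)).trans (ih (by omega) (u - 1) ha' b c)
    have at_even (i : ℤ) : a * (2 * i) ^ 2 + b * (2 * i) + c = 2 * (2 * a * i ^ 2 + b * i) + c := by
      ring
    have at_odd (i : ℤ) : a * (2 * i + 1) ^ 2 + b * (2 * i + 1) + c =
        2 * (2 * a * i ^ 2 + (2 * a + b) * i) + (a + b + c) := by ring
    rw [pow_succ', sum_range_two_mul]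
    push_cast
    simp_rw [at_even, at_odd]
    exact (halved b c).add (halved (2 * a + b) (a + b + c))

lemma two_pow_dvd_sum_quadratic_coset {q h t : ℕ} (ht : t ≤ q + h) (u : ℕ) (a b c l : ℤ) :
    2 ^ min q (min (q + h - u) ((q + h + 1) / 2)) ∣ ∑ j ∈ range (2 ^ q),
      dyadicWeight u t (a * (l + 2 ^ h * j) ^ 2 + b * (l + 2 ^ h * j) + c) := by
  have expand (j : ℤ) : a * (l + 2 ^ h * j) ^ 2 + b * (l + 2 ^ h * j) + c =
      2 ^ h * (2 ^ h * a * j ^ 2 + (2 * a * l + b) * j) + (a * l ^ 2 + b * l + c) := by ring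
  simp_rw [expand]
  refine dvd_sum_two_pow_mul_add h ?_ (fun c ↦ ?_) _
  · simpa using pow_dvd_pow 2 (min_le_left _ _)
  · exact (pow_dvd_pow 2 (by omega)).trans
      (two_pow_dvd_sum_quadratic (by omega) (u - h) (dvd_mul_right _ _) _ c)

/-- Abel summation: `f` at valuation `u + f` is a sum of `f` indicators of divisibility. -/
lemma sum_mul_ite_valuation (u v : ℕ) (y : ℤ) :
    ∑ f ∈ range v, f * (if (2 : ℤ) ^ (u + f) ∣ y ∧ ¬ (2 : ℤ) ^ (u + f + 1) ∣ y then 1 else 0) +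
      (v + 1) * (if (2 : ℤ) ^ (u + v) ∣ y then 1 else 0) = dyadicWeight u (u + v) y := by
  induction v with
  | zero => simp [dyadicWeight]
  | succ v ih =>
    have hdvd : (2 : ℤ) ^ (u + v + 1) ∣ y → (2 : ℤ) ^ (u + v) ∣ y :=
      (pow_dvd_pow 2 (Nat.le_succ _)).trans
    rw [dyadicWeight] at ih ⊢
    rw [sum_range_succ, ← add_assoc, ← insert_Ioc_right_eq_Ioc_add_one (Nat.le_add_right u v),
      filter_insert]
    grind

end dyadicWeight

lemma card_filter_range_odd_multiple (t n : ℕ) (y : ℤ) :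
    #{s ∈ range (2 ^ n) | (2 : ℤ) ^ (t + n + 1) ∣ y - 2 ^ t * (2 * (s : ℕ) + 1)} =
      if (2 : ℤ) ^ t ∣ y ∧ ¬ (2 : ℤ) ^ (t + 1) ∣ y then 1 else 0 := by
  have valuation {s : ℕ} (hs : (2 : ℤ) ^ (t + n + 1) ∣ y - 2 ^ t * (2 * s + 1)) :
      (2 : ℤ) ^ t ∣ y ∧ ¬ (2 : ℤ) ^ (t + 1) ∣ y := by
    constructor
    · exact (dvd_iff_dvd_of_dvd_sub ((pow_dvd_pow 2 (by omega)).trans hs)).2 (dvd_mul_right _ _)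
    · rw [dvd_iff_dvd_of_dvd_sub ((pow_dvd_pow 2 (by omega)).trans hs), pow_succ,
        mul_dvd_mul_iff_left (by positivity)]
      omega
  split_ifs with hy
  · obtain ⟨⟨z, rfl⟩, hz⟩ := hy
    obtain ⟨w, rfl⟩ : Odd z := by
      rwa [pow_succ, mul_dvd_mul_iff_left (by positivity), Int.two_dvd_ne_zero,
        ← Int.odd_iff] at hz
    have reduce (s : ℕ) : (2 : ℤ) ^ (t + n + 1) ∣ 2 ^ t * (2 * w + 1) - 2 ^ t * (2 * s + 1) ↔
        (2 : ℤ) ^ n ∣ -1 * s + w := by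
      rw [show 2 ^ t * (2 * w + 1) - 2 ^ t * (2 * (s : ℤ) + 1) = 2 ^ t * (2 * (-1 * s + w)) by ring,
        add_assoc, pow_add, mul_dvd_mul_iff_left (by positivity), two_pow_succ_dvd_two_mul]
    simp_rw [reduce]
    simpa using card_filter_range_two_pow_dvd le_rfl (odd_neg.2 odd_one) w
  · exact card_eq_zero.2 (filter_eq_empty_iff.2 fun s _ hs ↦ hy (valuation hs))

/-- The multiplicity `c_S(y)` of `y` in the multiset `S` with parameters `r`, `v`, `e`: the
inner sum over `f` and the term with factor `v + 1` count `y` in the `i`-th translate of the two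
kinds of parts of `S`. The exponents are truncated differences, so `v ≤ r` and `e ≤ r` are
intended. -/
def multiplicityInS (r v e : ℕ) (y : ZMod (2 ^ r)) : ℕ :=
  ∑ i ∈ range (2 ^ e),
    ((∑ f ∈ range v, f * #{s ∈ range (2 ^ (v - f - 1)) |
        y = (2 : ZMod (2 ^ r)) ^ (r - e) * (i : ZMod (2 ^ r)) +
          (2 : ZMod (2 ^ r)) ^ (r - v + f) * ((2 * s + 1 : ℕ) : ZMod (2 ^ r))}) +
      (v + 1) * if y = (2 : ZMod (2 ^ r)) ^ (r - e) * (i : ZMod (2 ^ r)) then 1 else 0)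

lemma intCast_zmod_two_pow_eq_iff {r : ℕ} {x y : ℤ} :
    (x : ZMod (2 ^ r)) = y ↔ (2 : ℤ) ^ r ∣ x - y := by
  rw [eq_comm, ZMod.intCast_eq_intCast_iff_dvd_sub]
  push_cast
  rfl

lemma multiplicityInS_intCast {r v e : ℕ} (hv : v ≤ r) (he : e ≤ v) (y : ℤ) :
    multiplicityInS r v e y = 2 ^ e * dyadicWeight (r - v) (r - e) y := by
  obtain ⟨u, rfl⟩ := Nat.exists_eq_add_of_le' hv
  rw [← dyadicWeight.sum_sub_two_pow_mul (by omega), Nat.sub_add_cancel (he.trans hv),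
    multiplicityInS, Nat.add_sub_cancel]
  refine sum_congr rfl fun i _ ↦ ?_
  set x : ℤ := 2 ^ (u + v - e) * i with hx
  have cast_x : (2 : ZMod (2 ^ (u + v))) ^ (u + v - e) * (i : ZMod (2 ^ (u + v))) = (x : ℤ) := by
    simp [hx]
  have dvd_iff (f s : ℕ) : ((y : ZMod (2 ^ (u + v))) = x + 2 ^ (u + f) * ((2 * s + 1 : ℕ) :
      ZMod (2 ^ (u + v)))) ↔ (2 : ℤ) ^ (u + v) ∣ y - x - 2 ^ (u + f) * (2 * s + 1) := by
    rw [sub_sub, ← intCast_zmod_two_pow_eq_iff]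
    push_cast
    rfl
  simp_rw [cast_x, dvd_iff, intCast_zmod_two_pow_eq_iff]
  rw [← dyadicWeight.sum_mul_ite_valuation]
  congr 1
  refine sum_congr rfl fun f hf ↦ ?_
  rw [← card_filter_range_odd_multiple (u + f) (v - f - 1),
    show u + f + (v - f - 1) + 1 = u + v by grind]

theorem stmt_18_general {r q v e : ℕ} (hq : q ≤ r) (hv : v ≤ r) (he : e ≤ v)
    (a b c l : ZMod (2 ^ r)) :
    2 ^ (e + min q (min v ((r + 1) / 2))) ∣ ∑ j ∈ range (2 ^ q),
      multiplicityInS r v e (a * (l + 2 ^ (r - q) * j) ^ 2 + b * (l + 2 ^ (r - q) * j) + c) := by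
  obtain ⟨a, rfl⟩ := ZMod.intCast_surjective a
  obtain ⟨b, rfl⟩ := ZMod.intCast_surjective b
  obtain ⟨c, rfl⟩ := ZMod.intCast_surjective c
  obtain ⟨l, rfl⟩ := ZMod.intCast_surjective l
  obtain ⟨h, rfl⟩ := Nat.exists_eq_add_of_le hq
  have weight (j : ℕ) :=
    multiplicityInS_intCast hv he (a * (l + 2 ^ h * j) ^ 2 + b * (l + 2 ^ h * j) + c)
  push_cast at weight
  simp_rw [Nat.add_sub_cancel_left, weight]
  rw [← mul_sum, pow_add]
  apply mul_dvd_mul_left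
  simpa only [Nat.sub_sub_self hv] using dyadicWeight.two_pow_dvd_sum_quadratic_coset
    (Nat.sub_le (q + h) e) (q + h - v) a b c l

/-- The size of the multiplicative intersection of the multiset
`S = (⋃_i ⋃_f f·{2^{r-e}i + 2^{r-v+f}(2s+1)}) ∪ (⋃_i (v+1)·{2^{r-e}i})`
with the image multiset of `P(x) = aₓx² + bₓx + c` on the coset
`{lₓ + 2^{r-q} j : j < 2^q}` is divisible by `2^{e + min(q, v, ⌈r/2⌉)}`. -/
theorem stmt_18 (r q v e : ℕ) (hr : 1 ≤ r) (hq : q ≤ r) (hv : v ≤ r)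
    (he : e ≤ min q v)
    (aX bX c lX : ZMod (2 ^ r))
    (P : ZMod (2 ^ r) → ZMod (2 ^ r))
    (hP : ∀ x : ZMod (2 ^ r), P x = aX * x ^ 2 + bX * x + c) :
    (2 ^ (e + min q (min v ((r + 1) / 2))) : ℕ) ∣
    ∑ j ∈ Finset.range (2 ^ q),
      ∑ i ∈ Finset.range (2 ^ e),
        ((∑ f ∈ Finset.range v,
            f * ((Finset.range (2 ^ (v - f - 1))).filter (fun s =>
              P (lX + (2 : ZMod (2 ^ r)) ^ (r - q) * (j : ZMod (2 ^ r)))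
                = (2 : ZMod (2 ^ r)) ^ (r - e) * (i : ZMod (2 ^ r))
                  + (2 : ZMod (2 ^ r)) ^ (r - v + f)
                    * ((2 * s + 1 : ℕ) : ZMod (2 ^ r)))).card)
          + (v + 1) *
            (if P (lX + (2 : ZMod (2 ^ r)) ^ (r - q) * (j : ZMod (2 ^ r)))
                = (2 : ZMod (2 ^ r)) ^ (r - e) * (i : ZMod (2 ^ r))
             then 1 else 0)) := by

  obtain rfl : P = fun x ↦ aX * x ^ 2 + bX * x + c := funext hP
  exact stmt_18_general hq hv (he.trans (min_le_right q v)) aX bX c lX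
end

section
/- Let r, m', f_s be natural numbers with m' ≤ r and f_s ≤ ⌈(r - m')/2⌉. Then Σ_{f=f_s}^{⌈(r-m')/2⌉ - 1} 2^{max(0, r-2f-3-m') + min(f+2, r-f-1) + min(m', max(0, r-2f-3))} + 2^{⌊(r+m')/2⌋} = 2^{r - f_s}. (This is the count of elements, rescaled by 2^k, of the multiset consisting of the slices for f = f_s up to ⌈(r-m')/2⌉ - 1 together with the final slice {t'} in the image description of a quadratic polynomial of type (c) over Z_{2^r}.) -/
/-! Applying `(a - b) + min a b = a` in `ℕ` twice collapses the three-part exponent to `r - f - 1`,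
for every `f`, and the final slice has exponent `⌊(r + m') / 2⌋ = r - ⌈(r - m') / 2⌉`. The sum is
then a reversed geometric sum of ratio `2`, to which the final slice adds the missing tail. -/

theorem sum_Ico_mul_add_one_pow_add_pow {R : Type*} [Semiring R] (x : R) {a n r : ℕ}
    (han : a ≤ n) (hnr : n ≤ r) :
    ∑ f ∈ Finset.Ico a n, x * (x + 1) ^ (r - f - 1) + (x + 1) ^ (r - n) = (x + 1) ^ (r - a) := by
  induction n, han using Nat.le_induction with
  | base => rw [Finset.Ico_self, Finset.sum_empty, zero_add]
  | succ n han ih =>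
    have merge : x * (x + 1) ^ (r - n - 1) + (x + 1) ^ (r - n - 1) = (x + 1) ^ (r - n) := by
      rw [← add_one_mul, mul_pow_sub_one (by lia)]
    rw [Finset.sum_Ico_succ_top han, ← Nat.sub_sub, add_assoc, merge, ih (by lia)]

theorem sum_Ico_two_pow_add_two_pow {a n r : ℕ} (han : a ≤ n) (hnr : n ≤ r) :
    ∑ f ∈ Finset.Ico a n, 2 ^ (r - f - 1) + 2 ^ (r - n) = 2 ^ (r - a) := by
  simpa only [one_mul, one_add_one_eq_two] using sum_Ico_mul_add_one_pow_add_pow (1 : ℕ) han hnr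

theorem slice_exponent_eq (r m f : ℕ) :
    (r - 2 * f - 3 - m) + min (f + 2) (r - f - 1) + min m (r - 2 * f - 3) = r - f - 1 := by
  have split : r - 2 * f - 3 = (r - f - 1) - (f + 2) := by lia
  calc
    _ = (r - 2 * f - 3 - m + min (r - 2 * f - 3) m) + min (r - f - 1) (f + 2) := by
      rw [add_right_comm, min_comm m, min_comm (f + 2)]
    _ = (r - f - 1 - (f + 2)) + min (r - f - 1) (f + 2) := by rw [tsub_add_min, split]
    _ = r - f - 1 := tsub_add_min

theorem add_div_two_eq_sub_ceil_half_sub {r m : ℕ} (hm : m ≤ r) :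
    (r + m) / 2 = r - (r - m + 1) / 2 := by
  lia

/-- Counting identity (rescaled by `2^k`): for `m' ≤ r` and `fs ≤ ⌈(r-m')/2⌉`,
`∑_{f=fs}^{⌈(r-m')/2⌉-1} 2^{max(0,r-2f-3-m') + min(f+2,r-f-1) + min(m',max(0,r-2f-3))}
  + 2^{⌊(r+m')/2⌋} = 2^{r-fs}`.
Here natural subtraction realizes the `max(0, ·)` truncations. -/
theorem stmt_19 (r m' fs : ℕ) (hm : m' ≤ r) (hfs : fs ≤ (r - m' + 1) / 2) :
    (∑ f ∈ Finset.Ico fs ((r - m' + 1) / 2),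
        2 ^ ((r - 2 * f - 3 - m') + min (f + 2) (r - f - 1)
              + min m' (r - 2 * f - 3)))
      + 2 ^ ((r + m') / 2) = 2 ^ (r - fs) := by
  have ceil_le : (r - m' + 1) / 2 ≤ r := by lia
  simp only [slice_exponent_eq]
  rw [add_div_two_eq_sub_ceil_half_sub hm]
  exact sum_Ico_two_pow_add_two_pow hfs ceil_le
end
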